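/- Let α and β be real numbers with 0 < α < 1 and 0 < β < 1. For real y > 2, define F(y) as the value of the continued fraction y/2 + K_{m=1}^∞(a_m/b_m(y)), where for m ≥ 1: a_{2m} = (2m−α−β)(2m−α)(2m−β)/4, a_{2m−1} = (2m−2+α+β)(2m−2+α)(2m−2+β)/4, b_{2m}(y) = y, b_{2m−1}(y) = (2m−1)(y+2(1−α−β)). Then for every real x > 2, the continued fractions defining F(x) and F(x+2) converge to positive real values, and F(x)/F(x+2) = (x+2−α−2β)·x·(x+2−2α−β) / [(x+2−α)(x+2−2α−2β)(x+2−β)]. -/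

import Mathlib

open Filter

noncomputable def cfA (a b : ℕ → ℝ) : ℕ → ℝ
  | 0 => 1
  | 1 => b 0
  | n + 2 => b (n + 1) * cfA a b (n + 1) + a (n + 1) * cfA a b n

noncomputable def cfB (a b : ℕ → ℝ) : ℕ → ℝ
  | 0 => 0
  | 1 => 1
  | n + 2 => b (n + 1) * cfB a b (n + 1) + a (n + 1) * cfB a b n

/-- The continued fraction `b 0 + K_{n=1}^∞ (a n / b n)` converges to `v`. -/
def CFConvergesTo (a b : ℕ → ℝ) (v : ℝ) : Prop :=
  (∀ᶠ n in atTop, cfB a b n ≠ 0) ∧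
    Tendsto (fun n => cfA a b n / cfB a b n) atTop (nhds v)
/-- `a_{2m} = (2m−α−β)(2m−α)(2m−β)/4`, `a_{2m−1} = (2m−2+α+β)(2m−2+α)(2m−2+β)/4`. -/
noncomputable def aSeq (α β : ℝ) : ℕ → ℝ := fun n =>
  if n % 2 = 0 then
    ((n : ℝ) - α - β) * ((n : ℝ) - α) * ((n : ℝ) - β) / 4
  else
    ((n : ℝ) - 1 + α + β) * ((n : ℝ) - 1 + α) * ((n : ℝ) - 1 + β) / 4

/-- `b_0 = y/2`, `b_{2m}(y) = y`, `b_{2m−1}(y) = (2m−1)(y+2(1−α−β))`. -/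
noncomputable def bSeq (α β : ℝ) (y : ℝ) : ℕ → ℝ := fun n =>
  if n = 0 then y / 2
  else if n % 2 = 0 then y else (n : ℝ) * (y + 2 * (1 - α - β))

/-!
For positive elements the differences of consecutive approximants alternate in sign and decrease in
absolute value, and by AM-GM two steps shrink them at least by the factor
`1 + 2 √(bₙ bₙ₊₁ / aₙ₊₁)`, so the continued fraction converges as soon as these square roots have a
divergent sum. Here they are at least of order `1 / n`.

The recurrences for `x` and `x + 2` are linked by a first-order difference operator with explicit
polynomial coefficients `P` and `C`: if `A` and `B` are the canonical numerators and denominators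
for `x`, then `Pₙ Aₙ₋₁ + aₙ Cₙ Aₙ₋₂` and `Pₙ Bₙ₋₁ + aₙ Cₙ Bₙ₋₂` are those for `x + 2`, multiplied
by `P₀` and `P₁` respectively. Their quotient is a mediant, with positive weights, of two
consecutive approximants of `F(x)`, hence tends to `F(x)`, so the approximants for `x + 2` tend to
`(P₁ / P₀) F(x)`.
-/

section Convergence

variable {a b : ℕ → ℝ}

theorem cfB_succ_pos (ha : ∀ n, 0 < a (n + 1)) (hb : ∀ n, 0 < b (n + 1)) :
    ∀ n, 0 < cfB a b (n + 1)
  | 0 => one_pos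
  | 1 => by simpa [cfB] using hb 0
  | n + 2 => add_pos (mul_pos (hb (n + 1)) (cfB_succ_pos ha hb (n + 1)))
      (mul_pos (ha (n + 1)) (cfB_succ_pos ha hb n))

theorem cfA_mul_cfB_sub_cfA_mul_cfB (a b : ℕ → ℝ) (n : ℕ) :
    cfA a b (n + 2) * cfB a b (n + 1) - cfA a b (n + 1) * cfB a b (n + 2) =
      (-1) ^ n * ∏ i ∈ Finset.range (n + 1), a (i + 1) := by
  induction n with
  | zero => simp [cfA, cfB, mul_comm]
  | succ n ih =>
    have hA : cfA a b (n + 3) = b (n + 2) * cfA a b (n + 2) + a (n + 2) * cfA a b (n + 1) := rfl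
    have hB : cfB a b (n + 3) = b (n + 2) * cfB a b (n + 2) + a (n + 2) * cfB a b (n + 1) := rfl
    rw [Finset.prod_range_succ, pow_succ, hA, hB]
    linear_combination -a (n + 2) * ih

/-- The distance between the `n`-th and the `(n + 1)`-st approximant of `b 0 + K (a n / b n)` when
all elements are positive. The `n`-th canonical denominator is `cfB a b (n + 1)`. -/
noncomputable def cfGap (a b : ℕ → ℝ) (n : ℕ) : ℝ :=
  (∏ i ∈ Finset.range (n + 1), a (i + 1)) / (cfB a b (n + 1) * cfB a b (n + 2))

theorem cfA_div_cfB_eq_sum_cfGap (hB : ∀ n, cfB a b (n + 1) ≠ 0) (n : ℕ) :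
    cfA a b (n + 1) / cfB a b (n + 1) =
      b 0 + ∑ i ∈ Finset.range n, (-1) ^ i * cfGap a b i := by
  induction n with
  | zero => simp [cfA, cfB]
  | succ n ih =>
    rw [Finset.sum_range_succ, ← add_assoc, ← ih, cfGap, ← mul_div_assoc,
      ← cfA_mul_cfB_sub_cfA_mul_cfB a b n]
    have := hB n
    have := hB (n + 1)
    field_simp
    ring

theorem cfGap_pos (ha : ∀ n, 0 < a (n + 1)) (hb : ∀ n, 0 < b (n + 1)) (n : ℕ) :
    0 < cfGap a b n :=
  div_pos (Finset.prod_pos fun i _ => ha i)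
    (mul_pos (cfB_succ_pos ha hb n) (cfB_succ_pos ha hb (n + 1)))

theorem cfGap_succ_mul_cfB (hB : ∀ n, cfB a b (n + 1) ≠ 0) (n : ℕ) :
    cfGap a b (n + 1) * cfB a b (n + 3) = cfGap a b n * (a (n + 2) * cfB a b (n + 1)) := by
  have := hB n
  have := hB (n + 1)
  have := hB (n + 2)
  rw [cfGap, cfGap, Finset.prod_range_succ _ (n + 1)]
  field_simp

theorem cfGap_antitone (ha : ∀ n, 0 < a (n + 1)) (hb : ∀ n, 0 < b (n + 1)) :
    Antitone (cfGap a b) := by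
  have hB := cfB_succ_pos ha hb
  refine antitone_nat_of_succ_le fun n => le_of_mul_le_mul_right ?_ (hB (n + 2))
  rw [cfGap_succ_mul_cfB fun n => (hB n).ne']
  refine mul_le_mul_of_nonneg_left ?_ (cfGap_pos ha hb n).le
  rw [cfB]
  exact le_add_of_nonneg_left (mul_pos (hb (n + 1)) (hB (n + 1))).le

theorem mul_one_add_two_sqrt_le {a a' b b' p q : ℝ} (ha' : 0 < a') (hb : 0 ≤ b) (hb' : 0 ≤ b')
    (hq : 0 ≤ q) :
    (a * p) * (a' * q) * (1 + 2 * √(b * b' / a')) ≤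
      (b * q + a * p) * (b' * (b * q + a * p) + a' * q) := by
  set e := √(b * b' / a')
  set r := b * q + a * p with hr
  have hcoeff : 0 ≤ a' * e * q := by positivity
  have he_sq : a' * e ^ 2 = b * b' := by
    rw [Real.sq_sqrt (by positivity), mul_div_cancel₀ _ ha'.ne']
  have hap : a * p ≤ r := le_add_of_nonneg_left (by positivity)
  have amgm : 2 * (a' * e * q * r) ≤ b' * r ^ 2 + a' * b * q ^ 2 := by
    have hsq : (2 * (a' * e * q * r)) ^ 2 ≤ (b' * r ^ 2 + a' * b * q ^ 2) ^ 2 := by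
      linear_combination sq_nonneg (b' * r ^ 2 - a' * b * q ^ 2) + 4 * a' * q ^ 2 * r ^ 2 * he_sq
    exact le_of_sq_le_sq hsq (by positivity)
  calc (a * p) * (a' * q) * (1 + 2 * e)
      = (a * p) * (a' * q) + 2 * (a' * e * q * (a * p)) := by ring
    _ ≤ (a * p) * (a' * q) + 2 * (a' * e * q * r) := by
        linarith [mul_le_mul_of_nonneg_left hap hcoeff]
    _ ≤ (a * p) * (a' * q) + (b' * r ^ 2 + a' * b * q ^ 2) := by gcongr
    _ = r * (b' * r + a' * q) := by rw [hr]; ring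

theorem cfGap_add_two_mul_le (ha : ∀ n, 0 < a (n + 1)) (hb : ∀ n, 0 < b (n + 1)) (n : ℕ) :
    cfGap a b (n + 2) * (1 + 2 * √(b (n + 2) * b (n + 3) / a (n + 3))) ≤ cfGap a b n := by
  have hB := cfB_succ_pos ha hb
  have hB₀ : ∀ n, cfB a b (n + 1) ≠ 0 := fun n => (hB n).ne'
  set s := 1 + 2 * √(b (n + 2) * b (n + 3) / a (n + 3))
  have hgrowth : (a (n + 2) * cfB a b (n + 1)) * (a (n + 3) * cfB a b (n + 2)) * s ≤
      cfB a b (n + 3) * cfB a b (n + 4) :=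
    mul_one_add_two_sqrt_le (ha _) (hb _).le (hb _).le (hB _).le
  refine le_of_mul_le_mul_right ?_ (mul_pos (hB (n + 2)) (hB (n + 3)))
  calc cfGap a b (n + 2) * s * (cfB a b (n + 3) * cfB a b (n + 4))
      = cfGap a b n *
          ((a (n + 2) * cfB a b (n + 1)) * (a (n + 3) * cfB a b (n + 2)) * s) := by
        linear_combination s * cfB a b (n + 3) * cfGap_succ_mul_cfB hB₀ (n + 1) +
          s * a (n + 3) * cfB a b (n + 2) * cfGap_succ_mul_cfB hB₀ n
    _ ≤ cfGap a b n * (cfB a b (n + 3) * cfB a b (n + 4)) :=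
        mul_le_mul_of_nonneg_left hgrowth (cfGap_pos ha hb n).le

theorem tendsto_zero_of_mul_one_add_le {u e : ℕ → ℝ} (hu : ∀ n, 0 ≤ u n) (he : ∀ n, 0 ≤ e n)
    (hsum : ¬Summable e) (h : ∀ n, u (n + 1) * (1 + e n) ≤ u n) :
    Tendsto u atTop (nhds 0) := by
  have hS : ∀ n, 0 ≤ ∑ i ∈ Finset.range n, e i := fun n => Finset.sum_nonneg fun i _ => he i
  have hbound : ∀ n, u n * (1 + ∑ i ∈ Finset.range n, e i) ≤ u 0 := by
    intro n
    induction n with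
    | zero => simp
    | succ n ih =>
      have hstep := mul_le_mul_of_nonneg_right (h n) (add_nonneg one_pos.le (hS n))
      refine le_trans ?_ (hstep.trans ih)
      rw [Finset.sum_range_succ, mul_assoc]
      refine mul_le_mul_of_nonneg_left ?_ (hu _)
      linarith [mul_nonneg (he n) (hS n)]
  have hdiv : Tendsto (fun n => 1 + ∑ i ∈ Finset.range n, e i) atTop atTop :=
    tendsto_atTop_add_const_left _ _ ((not_summable_iff_tendsto_nat_atTop_of_nonneg he).1 hsum)
  refine squeeze_zero hu (fun n => ?_) (hdiv.const_div_atTop (u 0))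
  exact (le_div_iff₀ (add_pos_of_pos_of_nonneg one_pos (hS n))).2 (hbound n)

theorem cfGap_tendsto_zero (ha : ∀ n, 0 < a (n + 1)) (hb : ∀ n, 0 < b (n + 1))
    (hsum : ¬Summable fun n => √(b (n + 1) * b (n + 2) / a (n + 2))) :
    Tendsto (cfGap a b) atTop (nhds 0) := by
  have hpos := cfGap_pos ha hb
  -- Multiplying by the middle gap turns the two-step decay of `cfGap` into a one-step decay, so
  -- that the even and the odd terms of the divergent series need not be separated.
  have hprod : Tendsto (fun n => cfGap a b n * cfGap a b (n + 1)) atTop (nhds 0) := by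
    refine tendsto_zero_of_mul_one_add_le
      (e := fun n => 2 * √(b (n + 2) * b (n + 3) / a (n + 3)))
      (fun n => (mul_pos (hpos n) (hpos (n + 1))).le) (fun n => by positivity) ?_ fun n => ?_
    · rw [summable_mul_left_iff two_ne_zero]
      exact fun h => hsum ((summable_nat_add_iff 1).1 h)
    · rw [mul_assoc, mul_comm (cfGap a b n)]
      exact mul_le_mul_of_nonneg_left (cfGap_add_two_mul_le ha hb n) (hpos (n + 1)).le
  have hsq : Tendsto (fun n => cfGap a b (n + 1) ^ 2) atTop (nhds 0) := by
    refine squeeze_zero (fun n => sq_nonneg _) (fun n => ?_) hprod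
    rw [sq]
    exact mul_le_mul_of_nonneg_right (cfGap_antitone ha hb n.le_succ) (hpos (n + 1)).le
  rw [← tendsto_add_atTop_iff_nat 1]
  simpa [Real.sqrt_sq (hpos _).le] using hsq.sqrt

theorem exists_cfConvergesTo_of_not_summable (ha : ∀ n, 0 < a (n + 1)) (hb : ∀ n, 0 < b (n + 1))
    (hsum : ¬Summable fun n => √(b (n + 1) * b (n + 2) / a (n + 2))) :
    ∃ v, b 0 ≤ v ∧ CFConvergesTo a b v := by
  have hB : ∀ n, cfB a b (n + 1) ≠ 0 := fun n => (cfB_succ_pos ha hb n).ne'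
  have hanti := cfGap_antitone ha hb
  obtain ⟨l, hl⟩ :=
    hanti.tendsto_alternating_series_of_tendsto_zero (cfGap_tendsto_zero ha hb hsum)
  have hl_nonneg : 0 ≤ l := by simpa using hanti.alternating_series_le_tendsto hl 0
  refine ⟨b 0 + l, le_add_of_nonneg_right hl_nonneg, ?_, ?_⟩
  · filter_upwards [eventually_ge_atTop 1] with n hn
    obtain ⟨k, rfl⟩ := Nat.exists_eq_add_of_le' hn
    exact hB k
  · rw [← tendsto_add_atTop_iff_nat 1]
    simpa only [cfA_div_cfB_eq_sum_cfGap hB] using hl.const_add (b 0)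

end Convergence

theorem tendsto_mediant {ι : Type*} {l : Filter ι} {p q p' q' : ι → ℝ} {v : ℝ}
    (hq : ∀ i, 0 < q i) (hq' : ∀ i, 0 < q' i)
    (h : Tendsto (fun i => p i / q i) l (nhds v))
    (h' : Tendsto (fun i => p' i / q' i) l (nhds v)) :
    Tendsto (fun i => (p i + p' i) / (q i + q' i)) l (nhds v) := by
  have hmin := h.min h'
  have hmax := h.max h'
  rw [min_self] at hmin
  rw [max_self] at hmax
  refine tendsto_of_tendsto_of_tendsto_of_le_of_le hmin hmax (fun i => ?_) fun i => ?_
  · rw [le_div_iff₀ (add_pos (hq i) (hq' i)), mul_add]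
    exact add_le_add ((le_div_iff₀ (hq i)).1 (min_le_left _ _))
      ((le_div_iff₀ (hq' i)).1 (min_le_right _ _))
  · rw [div_le_iff₀ (add_pos (hq i) (hq' i)), mul_add]
    exact add_le_add ((div_le_iff₀ (hq i)).1 (le_max_left _ _))
      ((div_le_iff₀ (hq' i)).1 (le_max_right _ _))

/-- Contiguity of the continued fractions with partial numerators `a` and partial denominators `b`
and `b'`: the coefficients `P` and `C` define the operator sending a solution `X` of the recurrence
`X (n + 2) = b (n + 1) * X (n + 1) + a (n + 1) * X n` to
`P (n + 1) * X (n + 1) + a (n + 1) * C (n + 1) * X n`. Comparing the coefficients of `X n` and of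
`X (n + 1)` shows that the last two fields make the image a solution of the recurrence for `a` and
`b'`; the first two make the images of the canonical numerators and denominators multiples of the
canonical ones for `b'`. -/
structure IsContiguous (a b b' C P : ℕ → ℝ) : Prop where
  zero : C 0 = 0
  initial : P 1 * b 0 + a 1 * C 1 = P 0 * b' 0
  coeff_self : ∀ n, P (n + 2) + b n * C n = P n + b' (n + 1) * C (n + 1)
  coeff_succ : ∀ n, P (n + 2) * b (n + 1) + a (n + 2) * C (n + 2) =
    P (n + 1) * b' (n + 1) + a (n + 1) * C n

namespace IsContiguous

variable {a b b' C P : ℕ → ℝ}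

theorem transform_eq (h : IsContiguous a b b' C P) {X Y : ℕ → ℝ} {K : ℝ}
    (hX : ∀ n, X (n + 2) = b (n + 1) * X (n + 1) + a (n + 1) * X n)
    (hY : ∀ n, Y (n + 2) = b' (n + 1) * Y (n + 1) + a (n + 1) * Y n)
    (h₀ : P 0 * X 0 = K * Y 0) (h₁ : P 1 * X 1 + a 1 * C 1 * X 0 = K * Y 1) (n : ℕ) :
    P (n + 1) * X (n + 1) + a (n + 1) * C (n + 1) * X n = K * Y (n + 1) := by
  -- The first conjunct is the same identity one index lower, with the recurrence used to rewrite
  -- `a n * X (n - 1)` so that it also makes sense for `n = 0`.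
  suffices hboth : P n * X n + C n * (X (n + 1) - b n * X n) = K * Y n ∧
      P (n + 1) * X (n + 1) + a (n + 1) * C (n + 1) * X n = K * Y (n + 1) from hboth.2
  induction n with
  | zero => exact ⟨by rw [h.zero, zero_mul, add_zero, h₀], h₁⟩
  | succ n ih =>
    obtain ⟨ih₀, ih₁⟩ := ih
    rw [add_assoc n 1 1, one_add_one_eq_two, hX n, hY n]
    constructor
    · linear_combination ih₁
    · linear_combination b' (n + 1) * ih₁ + a (n + 1) * ih₀ + X (n + 1) * h.coeff_succ n +
        a (n + 1) * X n * h.coeff_self n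

theorem cfA_eq (h : IsContiguous a b b' C P) (n : ℕ) :
    P (n + 1) * cfA a b (n + 1) + a (n + 1) * C (n + 1) * cfA a b n =
      P 0 * cfA a b' (n + 1) :=
  h.transform_eq (X := cfA a b) (Y := cfA a b') (fun _ => rfl) (fun _ => rfl) rfl
    (by simpa [cfA] using h.initial) n

theorem cfB_eq (h : IsContiguous a b b' C P) (n : ℕ) :
    P (n + 1) * cfB a b (n + 1) + a (n + 1) * C (n + 1) * cfB a b n =
      P 1 * cfB a b' (n + 1) :=
  h.transform_eq (fun _ => rfl) (fun _ => rfl) (by simp [cfB]) (by simp [cfB]) n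

theorem cfConvergesTo (h : IsContiguous a b b' C P) (ha : ∀ n, 0 < a (n + 1))
    (hb : ∀ n, 0 < b (n + 1)) (hC : ∀ n, 0 < C (n + 1)) (hP : ∀ n, 0 < P n) {v : ℝ}
    (hv : CFConvergesTo a b v) : CFConvergesTo a b' (P 1 / P 0 * v) := by
  have hB := cfB_succ_pos ha hb
  have hP₀ := (hP 0).ne'
  have hP₁ := (hP 1).ne'
  have haC : ∀ n, 0 < a (n + 1) * C (n + 1) := fun n => mul_pos (ha n) (hC n)
  have hden : ∀ n, 0 < P (n + 2) * cfB a b (n + 2) := fun n => mul_pos (hP _) (hB _)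
  have hden' : ∀ n, 0 < a (n + 2) * C (n + 2) * cfB a b (n + 1) :=
    fun n => mul_pos (haC _) (hB _)
  have hB' : ∀ n, cfB a b' (n + 2) ≠ 0 := fun n hzero =>
    (add_pos (hden n) (hden' n)).ne' (by rw [h.cfB_eq, hzero, mul_zero])
  refine ⟨?_, ?_⟩
  · filter_upwards [eventually_ge_atTop 2] with n hn
    obtain ⟨k, rfl⟩ := Nat.exists_eq_add_of_le' hn
    exact hB' k
  have hlim : Tendsto (fun n => P 0 * cfA a b' (n + 2) / (P 1 * cfB a b' (n + 2))) atTop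
      (nhds v) := by
    simp only [← h.cfA_eq, ← h.cfB_eq]
    refine tendsto_mediant hden hden' ?_ ?_
    · simp only [mul_div_mul_left _ _ (hP _).ne']
      exact hv.2.comp (tendsto_add_atTop_nat 2)
    · simp only [mul_div_mul_left _ _ (haC _).ne']
      exact hv.2.comp (tendsto_add_atTop_nat 1)
  rw [← tendsto_add_atTop_iff_nat 2]
  refine (hlim.const_mul (P 1 / P 0)).congr fun n => ?_
  have := hB' n
  field_simp

end IsContiguous

section Elements

variable (α β y : ℝ) (m : ℕ)

theorem aSeq_even : aSeq α β (2 * m) =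
    (2 * (m : ℝ) - α - β) * (2 * (m : ℝ) - α) * (2 * (m : ℝ) - β) / 4 := by
  simp [aSeq]

theorem aSeq_odd : aSeq α β (2 * m + 1) =
    (2 * (m : ℝ) + α + β) * (2 * (m : ℝ) + α) * (2 * (m : ℝ) + β) / 4 := by
  simp [aSeq, Nat.add_mod]

theorem bSeq_even_succ : bSeq α β y (2 * (m + 1)) = y := by
  simp [bSeq]

theorem bSeq_odd : bSeq α β y (2 * m + 1) =
    (2 * (m : ℝ) + 1) * (y + 2 * (1 - α - β)) := by
  simp [bSeq, Nat.add_mod]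

end Elements

section Positivity

variable {α β y : ℝ}

theorem aSeq_succ_pos (hα : 0 < α) (hβ : 0 < β) (hαβ : α + β < 2) (n : ℕ) :
    0 < aSeq α β (n + 1) := by
  obtain ⟨m, rfl | rfl⟩ := Nat.even_or_odd' n
  · rw [aSeq_odd]; positivity
  · rw [add_assoc, ← mul_add_one, aSeq_even]
    push_cast
    have : (0 : ℝ) ≤ m := m.cast_nonneg
    have h₁ : 0 < 2 * ((m : ℝ) + 1) - α - β := by linarith
    have h₂ : 0 < 2 * ((m : ℝ) + 1) - α := by linarith
    have h₃ : 0 < 2 * ((m : ℝ) + 1) - β := by linarith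
    positivity

theorem aSeq_add_two_le (hα : 0 < α) (hβ : 0 < β) (hαβ : α + β < 2) (n : ℕ) :
    aSeq α β (n + 2) ≤ 2 * ((n : ℝ) + 1) ^ 3 := by
  have hcube : ∀ {r s t M : ℝ}, 0 ≤ s → 0 ≤ t → r ≤ 2 * M → s ≤ 2 * M → t ≤ 2 * M →
      r * s * t / 4 ≤ 2 * M ^ 3 := by
    intro r s t M hs ht hrM hsM htM
    have hM : 0 ≤ M := by linarith
    calc r * s * t / 4 ≤ (2 * M) * (2 * M) * (2 * M) / 4 := by gcongr
      _ = 2 * M ^ 3 := by ring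
  obtain ⟨m, rfl | rfl⟩ := Nat.even_or_odd' n
  · have : (0 : ℝ) ≤ m := m.cast_nonneg
    rw [← mul_add_one, aSeq_even]
    push_cast
    apply hcube <;> linarith
  · have : (0 : ℝ) ≤ m := m.cast_nonneg
    rw [add_right_comm, ← mul_add_one, aSeq_odd]
    push_cast
    apply hcube <;> linarith

theorem bSeq_pos (hy : 0 < y) (hδ : 0 < y + 2 * (1 - α - β)) (n : ℕ) : 0 < bSeq α β y n := by
  unfold bSeq
  split_ifs with h
  · exact half_pos hy
  · exact hy
  · exact mul_pos (Nat.cast_pos.2 (Nat.pos_of_ne_zero h)) hδ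

theorem le_bSeq_succ_mul_bSeq_add_two (hy : 0 < y) (hδ : 0 < y + 2 * (1 - α - β)) (n : ℕ) :
    ((n : ℝ) + 1) * (y * (y + 2 * (1 - α - β))) ≤ bSeq α β y (n + 1) * bSeq α β y (n + 2) := by
  obtain ⟨m, rfl | rfl⟩ := Nat.even_or_odd' n
  · rw [bSeq_odd, ← mul_add_one, bSeq_even_succ]
    push_cast
    exact le_of_eq (by ring)
  · rw [add_assoc, ← mul_add_one, bSeq_even_succ, add_right_comm, ← mul_add_one, bSeq_odd]
    push_cast
    linear_combination mul_pos hy hδ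

theorem not_summable_sqrt_bSeq_mul_div_aSeq (hα : 0 < α) (hβ : 0 < β) (hαβ : α + β < 2)
    (hy : 0 < y) (hδ : 0 < y + 2 * (1 - α - β)) :
    ¬Summable fun n => √(bSeq α β y (n + 1) * bSeq α β y (n + 2) / aSeq α β (n + 2)) := by
  set K := y * (y + 2 * (1 - α - β))
  have hK_pos : 0 < K := mul_pos hy hδ
  have hbound : ∀ n : ℕ, √(K / 2) * (1 / ((n : ℝ) + 1)) ≤
      √(bSeq α β y (n + 1) * bSeq α β y (n + 2) / aSeq α β (n + 2)) := by
    intro n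
    refine Real.le_sqrt_of_sq_le ?_
    rw [mul_pow, Real.sq_sqrt (by positivity), le_div_iff₀ (aSeq_succ_pos hα hβ hαβ (n + 1))]
    calc K / 2 * (1 / ((n : ℝ) + 1)) ^ 2 * aSeq α β (n + 2)
        ≤ K / 2 * (1 / ((n : ℝ) + 1)) ^ 2 * (2 * ((n : ℝ) + 1) ^ 3) := by
          gcongr
          exact aSeq_add_two_le hα hβ hαβ n
      _ = ((n : ℝ) + 1) * K := by field_simp
      _ ≤ bSeq α β y (n + 1) * bSeq α β y (n + 2) := le_bSeq_succ_mul_bSeq_add_two hy hδ n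
  intro hsum
  have hharmonic := hsum.of_nonneg_of_le (fun n => by positivity) hbound
  rw [summable_mul_left_iff (Real.sqrt_pos.2 (by positivity)).ne'] at hharmonic
  refine Real.not_summable_one_div_natCast ((summable_nat_add_iff 1).1 ?_)
  simpa only [Nat.cast_add_one] using hharmonic

theorem exists_pos_cfConvergesTo_aSeq_bSeq (hα : 0 < α) (hβ : 0 < β) (hαβ : α + β < 2)
    (hy : 0 < y) (hδ : 0 < y + 2 * (1 - α - β)) :
    ∃ v, 0 < v ∧ CFConvergesTo (aSeq α β) (bSeq α β y) v := by
  have hb := bSeq_pos hy hδ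
  obtain ⟨v, hv, hconv⟩ := exists_cfConvergesTo_of_not_summable (aSeq_succ_pos hα hβ hαβ)
    (fun n => hb (n + 1)) (not_summable_sqrt_bSeq_mul_div_aSeq hα hβ hαβ hy hδ)
  exact ⟨v, (hb 0).trans_le hv, hconv⟩

end Positivity

section Shift

/-- The coefficients `C` of the contiguity relation between `bSeq α β x` and `bSeq α β (x + 2)`. -/
noncomputable def shiftC (α β x : ℝ) (n : ℕ) : ℝ :=
  if n % 2 = 0 then 4 * n * (x + 2 * (1 - α - β)) else 4 * x

/-- The coefficients `P` of the contiguity relation between `bSeq α β x` and `bSeq α β (x + 2)`,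
normalized so that `P 0` and `P 1` are the numerator and the denominator of `F(x) / F(x + 2)`. -/
noncomputable def shiftP (α β x : ℝ) (n : ℕ) : ℝ :=
  if n % 2 = 0 then
    x * ((x + 2 - α - 2 * β) * (x + 2 - 2 * α - β) + 2 * n * (n + x + 2 * (1 - α - β)))
  else
    (x + 2 * (1 - α - β)) * ((x + 2 - α) * (x + 2 - β) + 2 * (n - 1) * (n + 1 + x))

variable (α β x : ℝ) (m : ℕ)

theorem shiftC_even : shiftC α β x (2 * m) = 8 * m * (x + 2 * (1 - α - β)) := by
  simp only [shiftC, Nat.mul_mod_right, if_true]; push_cast; ring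

theorem shiftC_odd : shiftC α β x (2 * m + 1) = 4 * x := by
  simp [shiftC, Nat.add_mod]

theorem shiftP_even : shiftP α β x (2 * m) =
    x * ((x + 2 - α - 2 * β) * (x + 2 - 2 * α - β) +
      4 * m * (2 * m + x + 2 * (1 - α - β))) := by
  simp only [shiftP, Nat.mul_mod_right, if_true]; push_cast; ring

theorem shiftP_odd : shiftP α β x (2 * m + 1) =
    (x + 2 * (1 - α - β)) * ((x + 2 - α) * (x + 2 - β) + 4 * m * (2 * m + 2 + x)) := by
  simp only [shiftP, Nat.mul_add_mod, Nat.one_mod, one_ne_zero, if_false]; push_cast; ring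

theorem shiftP_zero :
    shiftP α β x 0 = (x + 2 - α - 2 * β) * x * (x + 2 - 2 * α - β) := by
  have h := shiftP_even α β x 0
  rw [mul_zero] at h
  rw [h, Nat.cast_zero]
  ring

theorem shiftP_one :
    shiftP α β x 1 = (x + 2 - α) * (x + 2 - 2 * α - 2 * β) * (x + 2 - β) := by
  have h := shiftP_odd α β x 0
  rw [mul_zero, zero_add] at h
  rw [h, Nat.cast_zero]
  ring

-- At `m = 0` the exceptional value `bSeq α β x 0 = x / 2` is multiplied by `shiftC α β x 0 = 0`.
theorem bSeq_mul_shiftC_even :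
    bSeq α β x (2 * m) * shiftC α β x (2 * m) = x * shiftC α β x (2 * m) := by
  cases m with
  | zero => simp [shiftC]
  | succ m => rw [bSeq_even_succ]

theorem shiftP_add_two_add_bSeq_mul_shiftC (n : ℕ) :
    shiftP α β x (n + 2) + bSeq α β x n * shiftC α β x n =
      shiftP α β x n + bSeq α β (x + 2) (n + 1) * shiftC α β x (n + 1) := by
  obtain ⟨m, rfl | rfl⟩ := Nat.even_or_odd' n
  · rw [bSeq_mul_shiftC_even, ← mul_add_one, bSeq_odd, shiftP_even, shiftP_even, shiftC_odd,
      shiftC_even]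
    push_cast; ring
  · rw [add_right_comm, add_assoc (2 * m) 1 1, ← mul_add_one, bSeq_odd, bSeq_even_succ,
      shiftP_odd, shiftP_odd, shiftC_odd, shiftC_even]
    push_cast; ring

theorem shiftP_add_two_mul_bSeq_add_aSeq_mul_shiftC (n : ℕ) :
    shiftP α β x (n + 2) * bSeq α β x (n + 1) + aSeq α β (n + 2) * shiftC α β x (n + 2) =
      shiftP α β x (n + 1) * bSeq α β (x + 2) (n + 1) + aSeq α β (n + 1) * shiftC α β x n := by
  obtain ⟨m, rfl | rfl⟩ := Nat.even_or_odd' n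
  · rw [← mul_add_one, bSeq_odd, bSeq_odd, shiftP_even, shiftP_odd, shiftC_even, shiftC_even,
      aSeq_even, aSeq_odd]
    push_cast; ring
  · rw [add_right_comm, add_assoc (2 * m) 1 1, ← mul_add_one, bSeq_even_succ, bSeq_even_succ,
      shiftP_even, shiftP_odd, shiftC_odd, shiftC_odd, aSeq_even, aSeq_odd]
    push_cast; ring

theorem isContiguous_bSeq_add_two :
    IsContiguous (aSeq α β) (bSeq α β x) (bSeq α β (x + 2)) (shiftC α β x) (shiftP α β x) where
  zero := by simp [shiftC]
  initial := by
    have ha : aSeq α β 1 = (α + β) * α * β / 4 := by simpa using aSeq_odd α β 0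
    have hC : shiftC α β x 1 = 4 * x := shiftC_odd α β x 0
    rw [shiftP_zero, shiftP_one, ha, hC]
    simp only [bSeq, if_true]
    ring
  coeff_self := shiftP_add_two_add_bSeq_mul_shiftC α β x
  coeff_succ := shiftP_add_two_mul_bSeq_add_aSeq_mul_shiftC α β x

variable {α β x}

theorem shiftC_succ_pos (hx : 0 < x) (hδ : 0 < x + 2 * (1 - α - β)) (n : ℕ) :
    0 < shiftC α β x (n + 1) := by
  unfold shiftC
  split_ifs <;> positivity

theorem shiftP_pos (hα : 0 < α) (hβ : 0 < β) (hx : 0 < x) (hδ : 0 < x + 2 * (1 - α - β)) (n : ℕ) :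
    0 < shiftP α β x n := by
  obtain ⟨m, rfl | rfl⟩ := Nat.even_or_odd' n
  · have h₁ : 0 < x + 2 - α - 2 * β := by linarith
    have h₂ : 0 < x + 2 - 2 * α - β := by linarith
    have h₃ : 0 < 2 * m + x + 2 * (1 - α - β) := by
      rw [add_assoc]; positivity
    rw [shiftP_even]; positivity
  · have h₁ : 0 < x + 2 - α := by linarith
    have h₂ : 0 < x + 2 - β := by linarith
    rw [shiftP_odd]; positivity

end Shift

theorem stmt18_general (α β : ℝ) (hα : 0 < α) (hβ : 0 < β) (hαβ : α + β < 2)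
    (x : ℝ) (hx : 0 < x) (hx' : 2 * (α + β - 1) < x) :
    ∃ F1 F2 : ℝ, CFConvergesTo (aSeq α β) (bSeq α β x) F1 ∧ 0 < F1 ∧
      CFConvergesTo (aSeq α β) (bSeq α β (x + 2)) F2 ∧ 0 < F2 ∧
      F1 / F2 = (x + 2 - α - 2 * β) * x * (x + 2 - 2 * α - β) /
        ((x + 2 - α) * (x + 2 - 2 * α - 2 * β) * (x + 2 - β)) := by
  have hδ : 0 < x + 2 * (1 - α - β) := by linarith
  have hP := shiftP_pos hα hβ hx hδ
  obtain ⟨F, hF_pos, hF⟩ := exists_pos_cfConvergesTo_aSeq_bSeq hα hβ hαβ hx hδ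
  have hF' := (isContiguous_bSeq_add_two α β x).cfConvergesTo (aSeq_succ_pos hα hβ hαβ)
    (fun n => bSeq_pos hx hδ (n + 1)) (shiftC_succ_pos hx hδ) hP hF
  refine ⟨F, _, hF, hF_pos, hF', mul_pos (div_pos (hP 1) (hP 0)) hF_pos, ?_⟩
  have hratio : F / (shiftP α β x 1 / shiftP α β x 0 * F) =
      shiftP α β x 0 / shiftP α β x 1 := by
    have := (hP 0).ne'
    have := (hP 1).ne'
    field_simp
  rw [hratio, shiftP_zero, shiftP_one]

theorem stmt18 (α β : ℝ) (hα0 : 0 < α) (hα1 : α < 1) (hβ0 : 0 < β) (hβ1 : β < 1)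
    (x : ℝ) (hx : 2 < x) :
    ∃ F1 F2 : ℝ, CFConvergesTo (aSeq α β) (bSeq α β x) F1 ∧ 0 < F1 ∧
      CFConvergesTo (aSeq α β) (bSeq α β (x + 2)) F2 ∧ 0 < F2 ∧
      F1 / F2 = (x + 2 - α - 2 * β) * x * (x + 2 - 2 * α - β) /
        ((x + 2 - α) * (x + 2 - 2 * α - 2 * β) * (x + 2 - β)) := by
  apply stmt18_general <;> linarith
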